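/- arXiv:2602.09978 — 2 statements merged into one kernel-verified Lean document; each statement's English description precedes it below -/
import Mathlib

section
/- Let G_1, …, G_k be connected finite simple graphs with pairwise-disjoint vertex sets except that a single vertex a belongs to every G_i. Assume each G_i is not a-outer geometric 1-planar and has at most m edges. If k ≥ m + 2, then the union of G_1, …, G_k is not geometric 1-planar. -/
open Set

noncomputable section

/-- The union of all (closed) straight-line edge segments of a geometric drawing. -/
def drawnSet {V : Type*} (G : SimpleGraph V) (pos : V → ℝ × ℝ) : Set (ℝ × ℝ) :=
  {x | ∃ u v, G.Adj u v ∧ x ∈ segment ℝ (pos u) (pos v)}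

/-- `pos` is a geometric (straight-line) drawing of `G`: vertices are distinct points,
no edge passes through a vertex other than its endpoints, and any two distinct edges
meet only in common endpoints or in a single proper crossing point interior to both. -/
def IsGeomDrawing {V : Type*} (G : SimpleGraph V) (pos : V → ℝ × ℝ) : Prop :=
  Function.Injective pos ∧
  (∀ u v, G.Adj u v → ∀ w : V, pos w ∈ segment ℝ (pos u) (pos v) → w = u ∨ w = v) ∧
  (∀ u v x y, G.Adj u v → G.Adj x y → s(u, v) ≠ s(x, y) →
    (segment ℝ (pos u) (pos v) ∩ segment ℝ (pos x) (pos y) ⊆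
        (pos '' {u, v}) ∩ (pos '' {x, y})) ∨
    (∃ p, segment ℝ (pos u) (pos v) ∩ segment ℝ (pos x) (pos y) = {p} ∧
        p ∈ openSegment ℝ (pos u) (pos v) ∧ p ∈ openSegment ℝ (pos x) (pos y)))

/-- The straight-line edges `uv` and `xy` cross properly: they meet in exactly one
point, interior to both segments. -/
def SegCross {V : Type*} (pos : V → ℝ × ℝ) (u v x y : V) : Prop :=
  ∃ p, segment ℝ (pos u) (pos v) ∩ segment ℝ (pos x) (pos y) = {p} ∧
    p ∈ openSegment ℝ (pos u) (pos v) ∧ p ∈ openSegment ℝ (pos x) (pos y)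

/-- The set of edges of `G` that cross the edge `uv` in the geometric drawing `pos`. -/
def crossingEdges {V : Type*} (G : SimpleGraph V) (pos : V → ℝ × ℝ) (u v : V) :
    Set (Sym2 V) :=
  {e | e ∈ G.edgeSet ∧ ∃ x y, e = s(x, y) ∧ SegCross pos u v x y}

/-- `pos` is a geometric 1-planar drawing of `G`: a geometric drawing in which every
edge is crossed at most once. -/
def IsGeom1Planar {V : Type*} (G : SimpleGraph V) (pos : V → ℝ × ℝ) : Prop :=
  IsGeomDrawing G pos ∧ ∀ u v, G.Adj u v → (crossingEdges G pos u v).Subsingleton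

/-- `G` is geometric 1-planar. -/
def GeomOnePlanar {V : Type*} (G : SimpleGraph V) : Prop :=
  ∃ pos : V → ℝ × ℝ, IsGeom1Planar G pos
/-- In the geometric drawing `pos` of `G`, the vertices `a` and `b` lie in (the closure
of) a common region, i.e. a common connected component of the complement of the drawing. -/
def SharedRegion {V : Type*} (G : SimpleGraph V) (pos : V → ℝ × ℝ) (a b : V) : Prop :=
  ∃ x, x ∉ drawnSet G pos ∧
    pos a ∈ closure (connectedComponentIn (drawnSet G pos)ᶜ x) ∧
    pos b ∈ closure (connectedComponentIn (drawnSet G pos)ᶜ x)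

/-- `a` and `b` lie on a common unbounded (outer) region of the drawing. -/
def OuterSharedRegion {V : Type*} (G : SimpleGraph V) (pos : V → ℝ × ℝ) (a b : V) : Prop :=
  ∃ x, x ∉ drawnSet G pos ∧
    ¬ Bornology.IsBounded (connectedComponentIn (drawnSet G pos)ᶜ x) ∧
    pos a ∈ closure (connectedComponentIn (drawnSet G pos)ᶜ x) ∧
    pos b ∈ closure (connectedComponentIn (drawnSet G pos)ᶜ x)

/-- `a` lies on an unbounded (outer) region of the drawing. -/
def OuterVertexRegion {V : Type*} (G : SimpleGraph V) (pos : V → ℝ × ℝ) (a : V) : Prop :=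
  ∃ x, x ∉ drawnSet G pos ∧
    ¬ Bornology.IsBounded (connectedComponentIn (drawnSet G pos)ᶜ x) ∧
    pos a ∈ closure (connectedComponentIn (drawnSet G pos)ᶜ x)

/-- `G` is `(a,b)`-shared geometric 1-planar. -/
def SharedGeomOnePlanar {V : Type*} (G : SimpleGraph V) (a b : V) : Prop :=
  ∃ pos, IsGeom1Planar G pos ∧ SharedRegion G pos a b

/-- `G` is `(a,b)`-outer geometric 1-planar. -/
def OuterSharedGeomOnePlanar {V : Type*} (G : SimpleGraph V) (a b : V) : Prop :=
  ∃ pos, IsGeom1Planar G pos ∧ OuterSharedRegion G pos a b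

/-- `G` is `a`-outer geometric 1-planar. -/
def OuterGeomOnePlanar {V : Type*} (G : SimpleGraph V) (a : V) : Prop :=
  ∃ pos, IsGeom1Planar G pos ∧ OuterVertexRegion G pos a

section GeometricDrawing

variable {V : Type*} {G K : SimpleGraph V} {pos : V → ℝ × ℝ}

theorem drawnSet_subset_of_endpoints_mem {C : Set (ℝ × ℝ)} (hC : Convex ℝ C)
    (h : ∀ u v, G.Adj u v → pos u ∈ C) : drawnSet G pos ⊆ C := by
  rintro p ⟨u, v, huv, hp⟩
  exact hC.segment_subset (h u v huv) (h v u huv.symm) hp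

theorem IsGeom1Planar.mono (hle : K ≤ G) (h : IsGeom1Planar G pos) : IsGeom1Planar K pos := by
  obtain ⟨⟨hinj, hvert, hcross⟩, hone⟩ := h
  refine ⟨⟨hinj, fun u v huv => hvert u v (hle huv),
    fun u v x y huv hxy => hcross u v x y (hle huv) (hle hxy)⟩, fun u v huv => ?_⟩
  exact (hone u v (hle huv)).anti fun e he =>
    ⟨SimpleGraph.edgeSet_mono hle he.1, he.2⟩

theorem SegCross.swap_left {u v x y : V} (h : SegCross pos u v x y) : SegCross pos v u x y := by
  unfold SegCross at *
  rwa [segment_symm ℝ (pos v), openSegment_symm ℝ (pos v)]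

theorem not_isBounded_of_ray_subset {p : ℝ × ℝ} {C : Set (ℝ × ℝ)}
    (h : ∀ t : ℝ, 0 < t → (p.1 + t, p.2) ∈ C) : ¬ Bornology.IsBounded C := by
  intro hb
  obtain ⟨R, hR⟩ := hb.exists_norm_le
  have h1 := hR _ (h (|R| + |p.1| + 1) (by positivity))
  have h2 := (norm_fst_le _).trans h1
  rw [Real.norm_eq_abs] at h2
  have h3 := (le_abs_self _).trans h2
  have h4 := neg_abs_le p.1
  have h5 := le_abs_self R
  dsimp only at h3
  linarith

/-- A point to the right of the whole drawing that is not on it lies in an unbounded region. -/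
theorem not_isBounded_component_of_right {p : ℝ × ℝ}
    (hright : ∀ q ∈ drawnSet G pos, q.1 ≤ p.1) (hp : p ∉ drawnSet G pos) :
    ¬ Bornology.IsBounded (connectedComponentIn (drawnSet G pos)ᶜ p) := by
  have hray : Convex ℝ {q : ℝ × ℝ | p.1 ≤ q.1 ∧ q.2 = p.2} :=
    (convex_halfSpace_ge (LinearMap.fst ℝ ℝ ℝ).isLinear p.1 : Convex ℝ {q : ℝ × ℝ | p.1 ≤ q.1}).inter
      (convex_hyperplane (LinearMap.snd ℝ ℝ ℝ).isLinear p.2)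
  have hsub := hray.isPreconnected.subset_connectedComponentIn (F := (drawnSet G pos)ᶜ)
    (x := p) ⟨le_rfl, rfl⟩ (by
      rintro q ⟨h1, h2⟩ hq
      exact hp (Prod.ext (le_antisymm (hright q hq) h1) h2 ▸ hq))
  exact not_isBounded_of_ray_subset fun t ht => hsub ⟨by simpa using ht.le, rfl⟩

/-- A rightmost vertex of a drawing lies on its outer region. -/
theorem outerVertexRegion_of_rightmost {a : V}
    (hright : ∀ q ∈ drawnSet G pos, q.1 ≤ (pos a).1) : OuterVertexRegion G pos a := by
  have hnot : ∀ t : ℝ, 0 < t → ((pos a).1 + t, (pos a).2) ∉ drawnSet G pos := fun t ht hq => by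
    have := hright _ hq
    dsimp only at this
    linarith
  have hray : Convex ℝ {q : ℝ × ℝ | (pos a).1 < q.1 ∧ q.2 = (pos a).2} :=
    (convex_halfSpace_gt (LinearMap.fst ℝ ℝ ℝ).isLinear (pos a).1 :
      Convex ℝ {q : ℝ × ℝ | (pos a).1 < q.1}).inter
      (convex_hyperplane (LinearMap.snd ℝ ℝ ℝ).isLinear (pos a).2)
  have hsub := hray.isPreconnected.subset_connectedComponentIn (F := (drawnSet G pos)ᶜ)
    (x := ((pos a).1 + 1, (pos a).2)) ⟨by simp, rfl⟩
    fun q hq hq' => absurd (hright q hq') (not_le.2 hq.1)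
  have hmem : ∀ t : ℝ, 0 < t → ((pos a).1 + t, (pos a).2) ∈
      connectedComponentIn (drawnSet G pos)ᶜ ((pos a).1 + 1, (pos a).2) :=
    fun t ht => hsub ⟨by simpa using ht, rfl⟩
  refine ⟨_, hnot 1 one_pos, not_isBounded_of_ray_subset hmem, ?_⟩
  have hlim : Filter.Tendsto (fun t : ℝ => ((pos a).1 + t, (pos a).2))
      (nhdsWithin 0 (Ioi 0)) (nhds (pos a)) := by
    have hc : Continuous fun t : ℝ => ((pos a).1 + t, (pos a).2) := by fun_prop
    simpa using (hc.tendsto 0).mono_left nhdsWithin_le_nhds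
  exact mem_closure_of_tendsto hlim (Filter.eventually_of_mem self_mem_nhdsWithin hmem)

/-- A walk that meets a set only in its final point `a` stays in a single component of the
complement until it reaches `a`. -/
theorem mem_closure_component_of_walk {D : Set (ℝ × ℝ)} {W : Type*} {F : SimpleGraph W}
    {f : W → ℝ × ℝ} (hf : Function.Injective f) {a : W}
    (hD : ∀ u v, F.Adj u v → segment ℝ (f u) (f v) ∩ D ⊆ {f a})
    (hvert : ∀ u v, F.Adj u v → f a ∈ segment ℝ (f u) (f v) → a = u ∨ a = v)
    {p : ℝ × ℝ} {u : W} (w : F.Walk u a) (hua : u ≠ a) (hu : f u ∈ connectedComponentIn Dᶜ p) :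
    f a ∈ closure (connectedComponentIn Dᶜ p) := by
  induction w with
  | nil => exact absurd rfl hua
  | @cons u v a huv w ih =>
    have hseg : segment ℝ (f u) (f v) \ {f a} ⊆ Dᶜ := fun q hq hqD =>
      hq.2 (hD u v huv ⟨hq.1, hqD⟩)
    have hfu : f u ≠ f a := hf.ne hua
    by_cases hva : v = a
    · subst hva
      have hsub : openSegment ℝ (f u) (f v) ⊆ segment ℝ (f u) (f v) \ {f v} := fun q hq =>
        ⟨openSegment_subset_segment ℝ _ _ hq, fun h => hfu <| by
          rw [mem_singleton_iff] at h
          exact right_mem_openSegment_iff.1 (h ▸ hq)⟩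
      have hpre : IsPreconnected (segment ℝ (f u) (f v) \ {f v}) :=
        (convex_openSegment (f u) (f v)).isPreconnected.subset_closure hsub (by
          rw [closure_openSegment]
          exact sdiff_subset)
      have hcomp := hpre.subset_connectedComponentIn ⟨left_mem_segment ℝ _ _, hfu⟩ hseg
      rw [← connectedComponentIn_eq hu] at hcomp
      have hcl := closure_mono (hsub.trans hcomp)
      rw [closure_openSegment] at hcl
      exact hcl (right_mem_segment ℝ _ _)
    · refine ih hD hvert hva ?_
      have hnot : f a ∉ segment ℝ (f u) (f v) := fun h =>
        (hvert u v huv h).elim (fun h => hua h.symm) fun h => hva h.symm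
      rw [sdiff_singleton_eq_self hnot] at hseg
      have hcomp := (convex_segment (f u) (f v)).isPreconnected.subset_connectedComponentIn
        (left_mem_segment ℝ _ _) hseg
      rw [← connectedComponentIn_eq hu] at hcomp
      exact hcomp (right_mem_segment ℝ _ _)

end GeometricDrawing

/-- Let `G_1, …, G_k` (here `H i`, with vertex set `S i` inside a common ambient finite
vertex type) be connected graphs with pairwise-disjoint vertex sets except that a
single vertex `a` belongs to every `G_i`.  Assume each `G_i` is not `a`-outer geometric
1-planar and has at most `m` edges.  If `k ≥ m + 2`, then `⋃ᵢ Gᵢ` is not geometric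
1-planar. -/
theorem stmt6 {V : Type*} [Fintype V] (k m : ℕ) (H : Fin k → SimpleGraph V)
    (S : Fin k → Set V) (a : V)
    (hmem : ∀ i, a ∈ S i)
    (hdisj : ∀ i j, i ≠ j → S i ∩ S j ⊆ {a})
    (hedges : ∀ i, ∀ u v : V, (H i).Adj u v → u ∈ S i ∧ v ∈ S i)
    (hconn : ∀ i, ((H i).induce (S i)).Connected)
    (hnotouter : ∀ i, ¬ OuterGeomOnePlanar (H i) a)
    (hm : ∀ i, (H i).edgeSet.ncard ≤ m)
    (hk : m + 2 ≤ k) :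
    ¬ GeomOnePlanar (⨆ i, H i) := by
  classical
  rintro ⟨pos, hpos⟩
  have hle : ∀ i, H i ≤ ⨆ i, H i := le_iSup H
  have hnot : ∀ i, ¬ OuterVertexRegion (H i) pos a := fun i h =>
    hnotouter i ⟨pos, hpos.mono (hle i), h⟩
  obtain ⟨⟨hinj, hvert, hmeet⟩, hone⟩ := hpos
  have hne : (⋃ i, S i).Nonempty := ⟨a, mem_iUnion.2 ⟨⟨0, by omega⟩, hmem _⟩⟩
  obtain ⟨v, hv, hmax⟩ := (toFinite (⋃ i, S i)).exists_maximalFor (fun u => (pos u).1) _ hne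
  obtain ⟨i, hvi⟩ := mem_iUnion.1 hv
  have hright : ∀ j, ∀ q ∈ drawnSet (H j) pos, q.1 ≤ (pos v).1 := fun j =>
    drawnSet_subset_of_endpoints_mem (C := {q | q.1 ≤ (pos v).1})
      (convex_halfSpace_le (LinearMap.fst ℝ ℝ ℝ).isLinear _) fun x y hxy =>
        (le_total (pos x).1 (pos v).1).elim id
          (hmax (mem_iUnion.2 ⟨j, (hedges j x y hxy).1⟩))
  have hva : v ≠ a := by
    rintro rfl
    exact hnot i (outerVertexRegion_of_rightmost (hright i))
  -- Every other graph is crossed by an edge of `H i`.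
  have hcross : ∀ j : {j // j ≠ i}, ∃ u w x y, (H i).Adj u w ∧ (H j).Adj x y ∧
      SegCross pos u w x y := by
    rintro ⟨j, hj⟩
    by_contra! hno
    have hvD : pos v ∉ drawnSet (H j) pos := by
      rintro ⟨x, y, hxy, h⟩
      have hvj : v ∈ S j := by
        rcases hvert x y (hle j hxy) v h with rfl | rfl
        exacts [(hedges j _ _ hxy).1, (hedges j _ _ hxy).2]
      exact hva (hdisj i j hj.symm ⟨hvi, hvj⟩)
    have hD : ∀ u w, (H i).Adj u w →
        segment ℝ (pos u) (pos w) ∩ drawnSet (H j) pos ⊆ {pos a} := by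
      rintro u w huw q ⟨hq, x, y, hxy, hq'⟩
      obtain ⟨hu, hw⟩ := hedges i u w huw
      obtain ⟨hx, hy⟩ := hedges j x y hxy
      have hcommon : ∀ z ∈ ({u, w} : Set V), z ∈ ({x, y} : Set V) → z = a := by
        intro z hz hz'
        refine hdisj i j hj.symm ⟨?_, ?_⟩
        · rcases hz with rfl | rfl <;> assumption
        · rcases hz' with rfl | rfl <;> assumption
      have hedge : s(u, w) ≠ s(x, y) := by
        intro h
        refine huw.ne ((hcommon u (by simp) ?_).trans (hcommon w (by simp) ?_).symm)
        · simpa [h] using Sym2.mem_mk_left u w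
        · simpa [h] using Sym2.mem_mk_right u w
      rcases hmeet u w x y (hle i huw) (hle j hxy) hedge with h | h
      · obtain ⟨⟨z, hz, rfl⟩, z', hz', hzz⟩ := h ⟨hq, hq'⟩
        obtain rfl := hinj hzz
        rw [hcommon _ hz hz', mem_singleton_iff]
      · exact absurd h (hno u w x y huw hxy)
    obtain ⟨walk⟩ := (hconn i).preconnected ⟨v, hvi⟩ ⟨a, hmem i⟩
    refine hnot j ⟨pos v, hvD, not_isBounded_component_of_right (hright j) hvD, ?_⟩
    exact mem_closure_component_of_walk (f := fun u : S i => pos u)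
      (hinj.comp Subtype.val_injective) (fun u w huw => hD u w huw)
      (fun u w huw h => (hvert u w (hle i huw) a h).imp (Subtype.ext ·) (Subtype.ext ·)) walk
      (fun h => hva (congrArg Subtype.val h)) (mem_connectedComponentIn hvD)
  choose u w x y huw hxy hc using hcross
  have hinjE : Function.Injective fun j => (⟨s(u j, w j), huw j⟩ : (H i).edgeSet) := by
    intro j j' h
    have h' : s(u j, w j) = s(u j', w j') := congrArg Subtype.val h
    have hc' : SegCross pos (u j) (w j) (x j') (y j') := by
      rcases Sym2.eq_iff.1 h' with ⟨h1, h2⟩ | ⟨h1, h2⟩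
      · simpa [h1, h2] using hc j'
      · simpa [h1, h2] using (hc j').swap_left
    have hxy' : s(x j, y j) = s(x j', y j') := hone _ _ (hle i (huw j))
      ⟨hle j (hxy j), _, _, rfl, hc j⟩ ⟨hle j' (hxy j'), _, _, rfl, hc'⟩
    have hadj : (H j').Adj (x j) (y j) := by
      rw [← SimpleGraph.mem_edgeSet, hxy']
      exact hxy j'
    by_contra hjj
    have hdis := hdisj j j' fun h => hjj (Subtype.ext h)
    obtain ⟨h1, h2⟩ := hedges _ _ _ (hxy j)
    obtain ⟨h3, h4⟩ := hedges _ _ _ hadj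
    exact hadj.ne ((hdis ⟨h1, h3⟩ : x j = a).trans (hdis ⟨h2, h4⟩ : y j = a).symm)
  have hcard := (Nat.card_le_card_of_injective _ hinjE).trans (hm i)
  have hidx : Nat.card {j // j ≠ i} = k - 1 := by
    simp [Nat.card_eq_fintype_card, Fintype.card_subtype_compl]
  omega
end
end

section
/- Let G be a finite simple graph whose edge set can be partitioned into f degree-2 paths, each of length at least f − 1. Then G is geometric 1-planar. -/
open Set

noncomputable section

/-- Vanishes exactly when the chords of the parabola `y = x ^ 2` over `a, b`, over `c, d` and over
`e, f` lie on concurrent or parallel lines. -/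
def chordDet {R : Type*} [CommRing R] (a b c d e f : R) : R :=
  (c + d - a - b) * (e * f - a * b) - (e + f - a - b) * (c * d - a * b)

theorem exists_generic_abscissae (V : Type*) [Finite V] :
    ∃ t : V → ℝ, Function.Injective t ∧ ∀ σ : Fin 6 ↪ V,
      chordDet (t (σ 0)) (t (σ 1)) (t (σ 2)) (t (σ 3)) (t (σ 4)) (t (σ 5)) ≠ 0 := by
  classical
  have := Fintype.ofFinite V
  let D : MvPolynomial (Fin 6) ℝ := chordDet (.X 0) (.X 1) (.X 2) (.X 3) (.X 4) (.X 5)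
  let E : MvPolynomial (Fin 2) ℝ := .X 0 - .X 1
  have hD : D ≠ 0 := fun h => by
    have := congrArg (MvPolynomial.eval ![(0 : ℝ), 0, 1, 1, 2, 2]) h
    simp only [D, chordDet, map_sub, map_mul, map_add, MvPolynomial.eval_X, map_zero] at this
    change ((1 : ℝ) + 1 - 0 - 0) * (2 * 2 - 0 * 0) - (2 + 2 - 0 - 0) * (1 * 1 - 0 * 0) = 0 at this
    norm_num at this
  have hE : E ≠ 0 := fun h => by
    have := congrArg (MvPolynomial.eval ![(0 : ℝ), 1]) h
    norm_num [E] at this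
  let Q : MvPolynomial V ℝ := (∏ σ : Fin 6 ↪ V, MvPolynomial.rename σ D) *
    ∏ τ : Fin 2 ↪ V, MvPolynomial.rename τ E
  have hQ : Q ≠ 0 := by
    refine mul_ne_zero (Finset.prod_ne_zero_iff.2 fun σ _ => ?_)
      (Finset.prod_ne_zero_iff.2 fun τ _ => ?_)
    · rwa [Ne, MvPolynomial.rename_eq_zero_iff_of_injective _ σ.injective]
    · rwa [Ne, MvPolynomial.rename_eq_zero_iff_of_injective _ τ.injective]
  obtain ⟨t, ht⟩ : ∃ t, MvPolynomial.eval t Q ≠ 0 := by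
    by_contra! h
    exact hQ (MvPolynomial.funext fun t => by simpa using h t)
  simp only [Q, map_mul, map_prod, mul_ne_zero_iff, Finset.prod_ne_zero_iff,
    MvPolynomial.eval_rename, Finset.mem_univ, true_imp_iff] at ht
  refine ⟨t, fun x y hxy => ?_, fun σ => ?_⟩
  · by_contra hne
    refine ht.2 ⟨![x, y], ?_⟩ ?_
    · intro i j; fin_cases i <;> fin_cases j <;> simp [hne, Ne.symm hne]
    · simp only [E, map_sub, MvPolynomial.eval_X]
      exact sub_eq_zero.2 hxy
  · simpa [D, chordDet] using ht.1 σ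

theorem exists_breakpoints (n : ℕ) (C : Finset ℝ) (a b : ℝ) (hab : a < b)
    (hC : ∀ x ∈ C, x ∈ Ioo a b) (hn : C.card ≤ n + 1) :
    ∃ X : ℕ → ℝ, StrictMono X ∧ X 0 = a ∧ X (n + 1) = b ∧ (∀ k ≤ n + 1, X k ∉ C) ∧
      ∀ k ≤ n, (Ioo (X k) (X (k + 1)) ∩ C).Subsingleton := by
  induction n generalizing C a with
  | zero =>
    refine ⟨fun k => a + k * (b - a), ?_, by simp, by simp, ?_, ?_⟩
    · refine strictMono_nat_of_lt_succ fun k => ?_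
      push_cast
      linarith
    · intro k hk h
      have := hC _ h
      interval_cases k <;> simp at this
    · intro k hk x hx y hy
      exact Finset.card_le_one.1 hn _ hx.2 _ hy.2
  | succ n ih =>
    obtain ⟨m, ham, hmb, hm⟩ : ∃ m, a < m ∧ m < b ∧ m ∉ C ∧
        (C.filter (m < ·)).card ≤ n + 1 ∧ ∀ x ∈ C, ∀ y ∈ C, x < m → y < m → x = y := by
      rcases C.eq_empty_or_nonempty with rfl | hne
      · obtain ⟨m, h1, h2⟩ := exists_between hab
        exact ⟨m, h1, h2, by simp⟩
      · set p := C.min' hne with hp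
        have hpC : p ∈ C := C.min'_mem hne
        have hle : ∀ x ∈ C, p ≤ x := fun x hx => C.min'_le x hx
        obtain ⟨q, hpq, hqb, hq⟩ : ∃ q, p < q ∧ q ≤ b ∧ ∀ x ∈ C, p < x → q ≤ x := by
          rcases (C.erase p).eq_empty_or_nonempty with h | h
          · refine ⟨b, (hC p hpC).2, le_rfl, fun x hx hpx => ?_⟩
            exact absurd (Finset.mem_erase.2 ⟨hpx.ne', hx⟩) (by simp [h])
          · have hq := Finset.mem_erase.1 ((C.erase p).min'_mem h)
            refine ⟨(C.erase p).min' h, lt_of_le_of_ne (hle _ hq.2) (Ne.symm hq.1),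
              (hC _ hq.2).2.le, fun x hx hpx => ?_⟩
            exact Finset.min'_le _ _ (Finset.mem_erase.2 ⟨hpx.ne', hx⟩)
        obtain ⟨m, hpm, hmq⟩ := exists_between hpq
        have hlt : ∀ x ∈ C, x ≤ m → x = p := fun x hx hxm => by
          by_contra h
          have := hq x hx (lt_of_le_of_ne (hle x hx) (Ne.symm h))
          linarith
        refine ⟨m, (hC p hpC).1.trans hpm, hmq.trans_le hqb, ?_, ?_, ?_⟩
        · intro h
          exact hpm.ne' (hlt m h le_rfl)
        · have : C.filter (m < ·) ⊆ C.erase p := fun x hx => by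
            have := Finset.mem_filter.1 hx
            exact Finset.mem_erase.2 ⟨(hpm.trans this.2).ne', this.1⟩
          have := Finset.card_le_card this
          rw [Finset.card_erase_of_mem hpC] at this
          omega
        · intro x hx y hy hxm hym
          rw [hlt x hx hxm.le, hlt y hy hym.le]
    obtain ⟨hmC, hcard, hsub⟩ := hm
    obtain ⟨X, hX, hX0, hXn, hXC, hXs⟩ := ih (C.filter (m < ·)) m hmb
      (fun x hx => ⟨(Finset.mem_filter.1 hx).2, (hC x (Finset.mem_filter.1 hx).1).2⟩) hcard
    refine ⟨fun k => Nat.casesOn k a X, ?_, rfl, hXn, ?_, ?_⟩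
    · refine strictMono_nat_of_lt_succ fun k => ?_
      cases k with
      | zero => simpa [hX0] using ham
      | succ k => exact hX k.lt_succ_self
    · intro k hk h
      cases k with
      | zero => exact (hC _ h).1.false
      | succ k =>
        rcases Nat.eq_zero_or_pos k with rfl | hk0
        · exact hmC (hX0 ▸ h)
        · exact hXC k (by omega) (Finset.mem_filter.2 ⟨h, hX0 ▸ hX hk0⟩)
    · intro k hk x hx y hy
      cases k with
      | zero => exact hsub x hx.2 y hy.2 (hX0 ▸ hx.1.2) (hX0 ▸ hy.1.2)
      | succ k =>
        have hmk : m ≤ X k := hX0 ▸ hX.monotone (Nat.zero_le k)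
        exact hXs k (by omega)
          ⟨hx.1, Finset.mem_coe.2 (Finset.mem_filter.2 ⟨hx.2, hmk.trans_lt hx.1.1⟩)⟩
          ⟨hy.1, Finset.mem_coe.2 (Finset.mem_filter.2 ⟨hy.2, hmk.trans_lt hy.1.1⟩)⟩

/-- `g` agrees with an affine function on `[p, q]`. -/
def AffineOnIcc (g : ℝ → ℝ) (p q : ℝ) : Prop :=
  ∃ m d : ℝ, ∀ x ∈ Icc p q, g x = m * x + d

/-- Members of a finite family of chords of the parabola can be bent slightly, close to their left
ends and by amounts prescribed up to a common factor, so that any two of the resulting curves cross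
at most once, curves with a common end do not cross, and no three curves cross in one point. -/
theorem exists_bent_chords {ι : Type*} [Finite ι] (T : Set ℝ) (hT : T.Finite) (a b c : ι → ℝ)
    (ha : ∀ i, a i ∈ T) (hb : ∀ i, b i ∈ T) (hab : ∀ i, a i < b i)
    (hc : ∀ i j, i ≠ j → a i = a j → b i = b j → c i ≠ c j)
    (hdet : ∀ i j k, a i ≠ a j → a i ≠ b j → b i ≠ a j → b i ≠ b j →
      a i ≠ a k → a i ≠ b k → b i ≠ a k → b i ≠ b k →
      a j ≠ a k → a j ≠ b k → b j ≠ a k → b j ≠ b k →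
      chordDet (a i) (b i) (a j) (b j) (a k) (b k) ≠ 0) :
    ∃ η > 0, ∃ g : ι → ℝ → ℝ,
      (∀ i, a i + η < b i) ∧
      (∀ i, g i (a i) = a i ^ 2) ∧ (∀ i, g i (b i) = b i ^ 2) ∧
      (∀ i, AffineOnIcc (g i) (a i) (a i + η)) ∧ (∀ i, AffineOnIcc (g i) (a i + η) (b i)) ∧
      (∀ i, c i = 0 → AffineOnIcc (g i) (a i) (b i)) ∧
      (∀ i, ∀ w ∈ T, w ∈ Icc (a i) (b i) → g i w = w ^ 2 → w = a i ∨ w = b i) ∧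
      (∀ i j, i ≠ j → ∀ x ∈ Ioo (a i) (b i), x ∈ Ioo (a j) (b j) → g i x = g j x →
        a i ≠ a j ∧ b i ≠ b j ∧ a i + η < x) ∧
      (∀ i j, i ≠ j → ∀ x ∈ Ioo (a i) (b i), x ∈ Ioo (a j) (b j) → g i x = g j x →
        ∀ y ∈ Ioo (a i) (b i), y ∈ Ioo (a j) (b j) → g i y = g j y → x = y) ∧
      (∀ i j k, i ≠ j → i ≠ k → j ≠ k → ∀ x ∈ Ioo (a i) (b i), x ∈ Ioo (a j) (b j) →
        x ∈ Ioo (a k) (b k) → g i x = g j x → g i x ≠ g k x) := by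
  obtain ⟨η, hη, hgap, hN⟩ : ∃ η > 0, (∀ w ∈ T, ∀ z ∈ T, w < z → w + η < z) ∧
      ∀ i j, a i < a j → a j < b i →
        (a j + b j) * (a j + η) - a j * b j < (a i + b i) * (a j + η) - a i * b i := by
    have h1 : ∀ᶠ η in nhdsWithin (0 : ℝ) (Ioi 0), ∀ w ∈ T, ∀ z ∈ T, w < z → w + η < z := by
      refine (Filter.eventually_all_finite hT).2 fun w _ =>
        (Filter.eventually_all_finite hT).2 fun z _ => ?_
      refine Filter.eventually_imp_distrib_left.2 fun hwz => nhdsWithin_le_nhds ?_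
      exact (by fun_prop : Continuous fun η : ℝ => w + η).tendsto' 0 w (by simp)
        |>.eventually_lt_const hwz
    have h2 : ∀ᶠ η in nhdsWithin (0 : ℝ) (Ioi 0), ∀ i j, a i < a j → a j < b i →
        (a j + b j) * (a j + η) - a j * b j < (a i + b i) * (a j + η) - a i * b i := by
      refine Filter.eventually_all.2 fun i => Filter.eventually_all.2 fun j => ?_
      refine Filter.eventually_imp_distrib_left.2 fun h1 =>
        Filter.eventually_imp_distrib_left.2 fun h2 => nhdsWithin_le_nhds ?_
      refine ContinuousAt.eventually_lt (by fun_prop) (by fun_prop) ?_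
      nlinarith [mul_pos (sub_pos.2 h1) (sub_pos.2 h2)]
    obtain ⟨η, ⟨h1, h2⟩, h3⟩ := ((h1.and h2).and self_mem_nhdsWithin).exists
    exact ⟨η, h3, h1, h2⟩
  let R : ℝ → ι → ℝ → ℝ := fun e i x => (a i + b i) * x - a i * b i + e * c i * (b i - x)
  obtain ⟨e, he, hE1, hE2, hE3, hE4⟩ : ∃ e > 0,
      (∀ i, ∀ w ∈ T, a i < w → w < b i → w ^ 2 < R e i w) ∧
      (∀ i j, a i < a j → a j < b i → R e j (a j + η) < R e i (a j + η)) ∧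
      (∀ i j, a i = a j → b i < b j → R e i (a i + η) < R e j (a i + η)) ∧
      (∀ i j k, a i ≠ a j → a i ≠ b j → b i ≠ a j → b i ≠ b j →
        a i ≠ a k → a i ≠ b k → b i ≠ a k → b i ≠ b k →
        a j ≠ a k → a j ≠ b k → b j ≠ a k → b j ≠ b k →
        ∀ x, R e i x = R e j x → R e i x ≠ R e k x) := by
    have h1 : ∀ᶠ e in nhdsWithin (0 : ℝ) (Ioi 0),
        ∀ i, ∀ w ∈ T, a i < w → w < b i → w ^ 2 < R e i w := by
      refine Filter.eventually_all.2 fun i => (Filter.eventually_all_finite hT).2 fun w _ => ?_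
      refine Filter.eventually_imp_distrib_left.2 fun h1 =>
        Filter.eventually_imp_distrib_left.2 fun h2 => nhdsWithin_le_nhds ?_
      refine ContinuousAt.eventually_lt (by fun_prop) (by fun_prop) ?_
      simp only [R]
      nlinarith [mul_pos (sub_pos.2 h1) (sub_pos.2 h2)]
    have h2 : ∀ᶠ e in nhdsWithin (0 : ℝ) (Ioi 0),
        ∀ i j, a i < a j → a j < b i → R e j (a j + η) < R e i (a j + η) := by
      refine Filter.eventually_all.2 fun i => Filter.eventually_all.2 fun j => ?_
      refine Filter.eventually_imp_distrib_left.2 fun h1 =>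
        Filter.eventually_imp_distrib_left.2 fun h2 => nhdsWithin_le_nhds ?_
      refine ContinuousAt.eventually_lt (by fun_prop) (by fun_prop) ?_
      simpa [R] using hN i j h1 h2
    have h3 : ∀ᶠ e in nhdsWithin (0 : ℝ) (Ioi 0),
        ∀ i j, a i = a j → b i < b j → R e i (a i + η) < R e j (a i + η) := by
      refine Filter.eventually_all.2 fun i => Filter.eventually_all.2 fun j => ?_
      refine Filter.eventually_imp_distrib_left.2 fun h1 =>
        Filter.eventually_imp_distrib_left.2 fun h2 => nhdsWithin_le_nhds ?_
      refine ContinuousAt.eventually_lt (by fun_prop) (by fun_prop) ?_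
      simp only [R, ← h1]
      nlinarith [mul_pos (sub_pos.2 h2) hη]
    have h4 : ∀ᶠ e in nhdsWithin (0 : ℝ) (Ioi 0),
        ∀ i j k, a i ≠ a j → a i ≠ b j → b i ≠ a j → b i ≠ b j →
        a i ≠ a k → a i ≠ b k → b i ≠ a k → b i ≠ b k →
        a j ≠ a k → a j ≠ b k → b j ≠ a k → b j ≠ b k →
        ∀ x, R e i x = R e j x → R e i x ≠ R e k x := by
      refine Filter.eventually_all.2 fun i => Filter.eventually_all.2 fun j =>
        Filter.eventually_all.2 fun k => ?_
      iterate 12 refine Filter.eventually_imp_distrib_left.2 fun _ => ?_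
      let m : ι → ℝ → ℝ := fun i e => a i + b i - e * c i
      let d : ι → ℝ → ℝ := fun i e => a i * b i - e * c i * b i
      have key : ∀ᶠ e in nhds (0 : ℝ),
          (m j e - m i e) * (d k e - d i e) - (m k e - m i e) * (d j e - d i e) ≠ 0 := by
        refine ContinuousAt.eventually_ne (by fun_prop) ?_
        have := hdet i j k ‹_› ‹_› ‹_› ‹_› ‹_› ‹_› ‹_› ‹_› ‹_› ‹_› ‹_› ‹_›
        contrapose! this
        simp only [m, d] at this
        rw [chordDet, ← this]
        ring
      refine nhdsWithin_le_nhds (key.mono fun e h x hij hik => h ?_)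
      have hij' : (m j e - m i e) * x = d j e - d i e := by
        simp only [R, m, d] at hij ⊢; linarith
      have hik' : (m k e - m i e) * x = d k e - d i e := by
        simp only [R, m, d] at hik ⊢; linarith
      rw [← hij', ← hik']
      ring
    obtain ⟨e, ⟨⟨⟨h1, h2⟩, h3⟩, h4⟩, h5⟩ :=
      ((((h1.and h2).and h3).and h4).and self_mem_nhdsWithin).exists
    exact ⟨e, h5, h1, h2, h3, h4⟩
  have hη' : (0 : ℝ) < η := hη
  have hbi : ∀ i, a i + η < b i := fun i => hgap _ (ha i) _ (hb i) (hab i)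
  let S : ι → ℝ → ℝ := fun i x =>
    (a i + b i) * x - a i * b i + e * c i * ((b i - a i - η) / η * (x - a i))
  let g : ι → ℝ → ℝ := fun i x => if x ≤ a i + η then S i x else R e i x
  have gS : ∀ i x, x ≤ a i + η → g i x = S i x := fun i x hx => if_pos hx
  have SR : ∀ i, S i (a i + η) = R e i (a i + η) := fun i => by
    simp only [S, R]; field_simp; ring
  have gR : ∀ i x, a i + η ≤ x → g i x = R e i x := fun i x hx => by
    rcases hx.eq_or_lt with rfl | h
    · rw [gS i _ le_rfl, SR]
    · exact if_neg h.not_ge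
  have gb : ∀ i, R e i (b i) = b i ^ 2 := fun i => by simp only [R]; ring
  have ga : ∀ i, S i (a i) = a i ^ 2 := fun i => by simp only [S]; ring
  -- curves with distinct left ends are apart above the bend of the later one
  have sep : ∀ i j x, a i < a j → x ∈ Ioo (a i) (b i) → x ∈ Ioo (a j) (b j) →
      g i x = g j x → b i ≠ b j ∧ a j + η < x := by
    intro i j x hij hxi hxj hx
    have hji : a j < b i := hxj.1.trans hxi.2
    have h1 := hgap _ (ha i) _ (ha j) hij
    have h2 := hE1 i _ (ha j) hij hji
    have h3 := hE2 i j hij hji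
    have hxlt : a j + η < x := by
      by_contra! hle
      rw [gR i x (by linarith [hxj.1]), gS j x hle] at hx
      have h4 := ga j
      rw [← SR] at h3
      have hs0 : 0 < x - a j := by linarith [hxj.1]
      have hs1 : 0 ≤ a j + η - x := by linarith
      have : η * (R e i x - S j x) = (a j + η - x) * (R e i (a j) - S j (a j)) +
          (x - a j) * (R e i (a j + η) - S j (a j + η)) := by
        simp only [R, S]; ring
      have p1 := mul_nonneg hs1 (sub_pos.2 (h4 ▸ h2)).le
      have p2 := mul_pos hs0 (sub_pos.2 h3)
      rw [hx, sub_self, mul_zero] at this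
      linarith
    refine ⟨fun hbb => ?_, hxlt⟩
    rw [gR i x (by linarith), gR j x hxlt.le] at hx
    have h4 := gb i
    have h5 := gb j
    have : (b i - (a j + η)) * (R e i x - R e j x) =
        (b i - x) * (R e i (a j + η) - R e j (a j + η)) +
          (x - (a j + η)) * (R e i (b i) - R e j (b i)) := by
      simp only [R]; ring
    rw [h4, hbb, h5, hx, sub_self, sub_self, mul_zero, mul_zero, add_zero] at this
    exact (mul_pos (sub_pos.2 hxj.2) (sub_pos.2 h3)).ne this
  have left_ne : ∀ i j x, a i = a j → b i < b j → x ∈ Ioo (a i) (b i) → g i x ≠ g j x := by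
    intro i j x hij hbb hxi hx
    have h3 := hE3 i j hij hbb
    rcases le_total x (a i + η) with h | h
    · rw [gS i x h, gS j x (hij ▸ h)] at hx
      have h4 := SR i
      have h5 := SR j
      rw [← hij] at h5
      rw [← h4, ← h5] at h3
      have : η * (S j x - S i x) = (x - a i) * (S j (a i + η) - S i (a i + η)) := by
        simp only [S, ← hij]; ring
      rw [hx, sub_self, mul_zero] at this
      exact (mul_pos (sub_pos.2 hxi.1) (sub_pos.2 h3)).ne this
    · rw [gR i x h, gR j x (hij ▸ h)] at hx
      have h4 := gb i
      have h5 := hE1 j _ (hb i) (hij ▸ hab i) hbb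
      have : (b i - (a i + η)) * (R e j x - R e i x) =
        (b i - x) * (R e j (a i + η) - R e i (a i + η)) +
          (x - (a i + η)) * (R e j (b i) - R e i (b i)) := by
        simp only [R]; ring
      rw [hx, sub_self, mul_zero] at this
      have p1 := mul_pos (sub_pos.2 hxi.2) (sub_pos.2 h3)
      have p2 := mul_nonneg (sub_nonneg.2 h) (sub_pos.2 (h4 ▸ h5)).le
      linarith
  have par_ne : ∀ i j x, i ≠ j → a i = a j → b i = b j → x ∈ Ioo (a i) (b i) →
      g i x ≠ g j x := by
    intro i j x hne hij hbb hxi hx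
    have hcc := sub_ne_zero.2 (hc i j hne hij hbb)
    rcases le_total x (a i + η) with h | h
    · rw [gS i x h, gS j x (hij ▸ h)] at hx
      have : e * (c i - c j) * ((b i - a i - η) / η * (x - a i)) = 0 := by
        simp only [S, ← hij, ← hbb] at hx; linarith
      have p : 0 < (b i - a i - η) / η * (x - a i) :=
        mul_pos (div_pos (by linarith [hbi i]) hη') (sub_pos.2 hxi.1)
      exact mul_ne_zero (mul_ne_zero (ne_of_gt he) hcc) p.ne' this
    · rw [gR i x h, gR j x (hij ▸ h)] at hx
      have : e * (c i - c j) * (b i - x) = 0 := by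
        simp only [R, ← hij, ← hbb] at hx; linarith
      exact mul_ne_zero (mul_ne_zero (ne_of_gt he) hcc) (sub_pos.2 hxi.2).ne' this
  have cross : ∀ i j, i ≠ j → ∀ x ∈ Ioo (a i) (b i), x ∈ Ioo (a j) (b j) → g i x = g j x →
      a i ≠ a j ∧ b i ≠ b j ∧ a i + η < x := by
    intro i j hne x hxi hxj hx
    rcases lt_trichotomy (a i) (a j) with h | h | h
    · obtain ⟨h1, h2⟩ := sep i j x h hxi hxj hx
      exact ⟨h.ne, h1, by linarith⟩
    · rcases lt_trichotomy (b i) (b j) with h' | h' | h'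
      · exact absurd hx (left_ne i j x h h' hxi)
      · exact absurd hx (par_ne i j x hne h h' hxi)
      · exact absurd hx.symm (left_ne j i x h.symm h' hxj)
    · obtain ⟨h1, h2⟩ := sep j i x h hxj hxi hx.symm
      exact ⟨h.ne', h1.symm, h2⟩
  have uniq : ∀ i j, a i < a j → ∀ x ∈ Ioo (a i) (b i), x ∈ Ioo (a j) (b j) → g i x = g j x →
        ∀ y ∈ Ioo (a i) (b i), y ∈ Ioo (a j) (b j) → g i y = g j y → x = y := by
    intro i j hij x hxi hxj hx y hyi hyj hy
    have h1 := (sep i j x hij hxi hxj hx).2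
    have h2 := (sep i j y hij hyi hyj hy).2
    have h3 := hE2 i j hij (hxj.1.trans hxi.2)
    rw [gR i x (by linarith), gR j x h1.le] at hx
    rw [gR i y (by linarith), gR j y h2.le] at hy
    by_contra hxy
    have : (y - x) * (R e i (a j + η) - R e j (a j + η)) =
        (y - (a j + η)) * (R e i x - R e j x) - (x - (a j + η)) * (R e i y - R e j y) := by
      simp only [R]; ring
    rw [hx, hy, sub_self, sub_self, mul_zero, mul_zero, sub_zero] at this
    exact mul_ne_zero (sub_ne_zero.2 (Ne.symm hxy)) (sub_pos.2 h3).ne' this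
  refine ⟨η, hη, g, hbi, fun i => ?_, fun i => ?_, fun i => ?_, fun i => ?_, fun i hi => ?_,
    ?_, cross, ?_, ?_⟩
  · rw [gS i _ (by linarith), ga]
  · rw [gR i _ (hbi i).le, gb]
  · refine ⟨a i + b i + e * c i * ((b i - a i - η) / η),
      - (a i * b i) - e * c i * ((b i - a i - η) / η * a i), fun x hx => ?_⟩
    rw [gS i x hx.2]
    simp only [S]; ring
  · refine ⟨a i + b i - e * c i, - (a i * b i) + e * c i * b i, fun x hx => ?_⟩
    rw [gR i x hx.1]
    simp only [R]; ring
  · refine ⟨a i + b i, - (a i * b i), fun x hx => ?_⟩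
    simp only [g, S, R, hi]
    split_ifs <;> ring
  · intro i w hw hwi hgw
    by_contra! h
    have h1 := lt_of_le_of_ne hwi.1 (Ne.symm h.1)
    have h2 := lt_of_le_of_ne hwi.2 h.2
    have h3 := hE1 i w hw h1 h2
    rw [gR i w (hgap _ (ha i) _ hw h1).le] at hgw
    exact h3.ne' hgw
  · intro i j hne x hxi hxj hx y hyi hyj hy
    rcases (cross i j hne x hxi hxj hx).1.lt_or_gt with h | h
    · exact uniq i j h x hxi hxj hx y hyi hyj hy
    · exact uniq j i h x hxj hxi hx.symm y hyj hyi hy.symm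
  · intro i j k hij hik hjk x hxi hxj hxk h1 h2
    have cij := cross i j hij x hxi hxj h1
    have cik := cross i k hik x hxi hxk h2
    have cjk := cross j k hjk x hxj hxk (h1.symm.trans h2)
    have ckj := cross k j hjk.symm x hxk hxj (h2.symm.trans h1)
    refine hE4 i j k cij.1 (hxi.1.trans hxj.2).ne (hxj.1.trans hxi.2).ne' cij.2.1
      cik.1 (hxi.1.trans hxk.2).ne (hxk.1.trans hxi.2).ne' cik.2.1
      cjk.1 (hxj.1.trans hxk.2).ne (hxk.1.trans hxj.2).ne' cjk.2.1 x ?_ ?_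
    · rw [← gR i x cij.2.2.le, ← gR j x cjk.2.2.le, h1]
    · rw [← gR i x cij.2.2.le, ← gR k x ckj.2.2.le, h2]
theorem mem_segment_graph_iff {g : ℝ → ℝ} {p q : ℝ} (hpq : p < q) (hg : AffineOnIcc g p q)
    (z : ℝ × ℝ) : z ∈ segment ℝ (p, g p) (q, g q) ↔ z.1 ∈ Icc p q ∧ z.2 = g z.1 := by
  obtain ⟨m, d, h⟩ := hg
  rw [h p (left_mem_Icc.2 hpq.le), h q (right_mem_Icc.2 hpq.le)]
  constructor
  · rintro ⟨r, s, hr, hs, hrs, rfl⟩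
    obtain rfl : r = 1 - s := by linarith
    have hx : (1 - s) * p + s * q ∈ Icc p q := by constructor <;> nlinarith
    refine ⟨by simpa using hx, ?_⟩
    simp only [Prod.smul_mk, smul_eq_mul, Prod.mk_add_mk]
    rw [h _ hx]
    ring
  · rintro ⟨hx, hy⟩
    have hz : z.1 ∈ segment ℝ p q := by rwa [segment_eq_Icc hpq.le]
    obtain ⟨r, s, hr, hs, hrs, hxe⟩ := hz
    refine ⟨r, s, hr, hs, hrs, Prod.ext (by simpa using hxe) ?_⟩
    rw [hy, h _ hx, ← hxe]
    simp only [Prod.smul_mk, smul_eq_mul, Prod.mk_add_mk]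
    linear_combination d * hrs

theorem mem_openSegment_graph_iff {g : ℝ → ℝ} {p q : ℝ} (hpq : p < q) (hg : AffineOnIcc g p q)
    (z : ℝ × ℝ) : z ∈ openSegment ℝ (p, g p) (q, g q) ↔ z.1 ∈ Ioo p q ∧ z.2 = g z.1 := by
  constructor
  · intro hz
    refine ⟨?_, ((mem_segment_graph_iff hpq hg z).1 (openSegment_subset_segment _ _ _ hz)).2⟩
    obtain ⟨r, s, hr, hs, hrs, rfl⟩ := hz
    rw [← openSegment_eq_Ioo hpq]
    exact ⟨r, s, hr, hs, hrs, by simp⟩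
  · rintro ⟨hx, hy⟩
    refine mem_openSegment_of_ne_left_right ?_ ?_
      ((mem_segment_graph_iff hpq hg z).2 ⟨⟨hx.1.le, hx.2.le⟩, hy⟩)
    · rintro rfl; exact hx.1.false
    · rintro rfl; exact hx.2.false

/-- If the edges of `G` are drawn on `x`-monotone curves in such a way that any two curves cross at
most once, crossing curves have no common vertices, there are no triple crossings, and no edge
contains two crossings, then the drawing is geometric 1-planar. -/
theorem isGeom1Planar_of_monotone_curves {V ι : Type*} (G : SimpleGraph V) (pos : V → ℝ × ℝ)
    (p : ι → ℕ → V) (L : ι → ℕ) (X : ι → ℕ → ℝ) (g : ι → ℝ → ℝ) (C : ι → ι → ℝ → Prop)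
    (hC : ∀ i j x, C i j x ↔
      x ∈ Ioo (X i 0) (X i (L i)) ∧ x ∈ Ioo (X j 0) (X j (L j)) ∧ g i x = g j x)
    (hX : ∀ i, StrictMono (X i))
    (hpos : ∀ i k, k ≤ L i → pos (p i k) = (X i k, g i (X i k)))
    (haff : ∀ i k, k < L i → AffineOnIcc (g i) (X i k) (X i (k + 1)))
    (hadj : ∀ u v, G.Adj u v → ∃ i k, k < L i ∧ s(u, v) = s(p i k, p i (k + 1)))
    (hinj : Function.Injective pos)
    (hvert : ∀ i x w, x ∈ Icc (X i 0) (X i (L i)) → pos w = (x, g i x) → ∃ k ≤ L i, w = p i k)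
    (hbreak : ∀ i j x, i ≠ j → C i j x → ∀ k ≤ L i, x ≠ X i k)
    (huniq : ∀ i j x y, i ≠ j → C i j x → C i j y → x = y)
    (hdisj : ∀ i j x, i ≠ j → C i j x → ∀ k ≤ L i, ∀ l ≤ L j, p i k ≠ p j l)
    (htriple : ∀ i j k x, i ≠ j → i ≠ k → j ≠ k → C i j x → ¬ C i k x)
    (hsub : ∀ i k, k < L i → ∀ x ∈ Ioo (X i k) (X i (k + 1)), ∀ y ∈ Ioo (X i k) (X i (k + 1)),
      ∀ j j', i ≠ j → i ≠ j' → C i j x → C i j' y → x = y) :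
    IsGeom1Planar G pos := by
  have hedge : ∀ u v, G.Adj u v → ∃ i k, k < L i ∧ s(u, v) = s(p i k, p i (k + 1)) ∧
      (∀ z, z ∈ segment ℝ (pos u) (pos v) ↔
        z.1 ∈ Icc (X i k) (X i (k + 1)) ∧ z.2 = g i z.1) ∧
      (∀ z, z ∈ openSegment ℝ (pos u) (pos v) ↔
        z.1 ∈ Ioo (X i k) (X i (k + 1)) ∧ z.2 = g i z.1) := by
    intro u v huv
    obtain ⟨i, k, hk, he⟩ := hadj u v huv
    refine ⟨i, k, hk, he, ?_⟩
    have h1 := mem_segment_graph_iff (hX i k.lt_succ_self) (haff i k hk)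
    have h2 := mem_openSegment_graph_iff (hX i k.lt_succ_self) (haff i k hk)
    simp only [Nat.succ_eq_add_one, ← hpos i k hk.le, ← hpos i (k + 1) hk] at h1 h2
    rcases Sym2.eq_iff.1 he with ⟨rfl, rfl⟩ | ⟨rfl, rfl⟩
    · exact ⟨h1, h2⟩
    · rw [segment_symm, openSegment_symm]
      exact ⟨h1, h2⟩
  have hIcc : ∀ i k, k < L i → ∀ x ∈ Icc (X i k) (X i (k + 1)), x ∈ Icc (X i 0) (X i (L i)) :=
    fun i k hk x hx => ⟨((hX i).monotone (Nat.zero_le k)).trans hx.1,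
      hx.2.trans ((hX i).monotone hk)⟩
  have hIoo : ∀ i k, k < L i → ∀ x ∈ Ioo (X i k) (X i (k + 1)), x ∈ Ioo (X i 0) (X i (L i)) :=
    fun i k hk x hx => ⟨((hX i).monotone (Nat.zero_le k)).trans_lt hx.1,
      hx.2.trans_le ((hX i).monotone hk)⟩
  have hon : ∀ i k w, k < L i → (pos w).1 ∈ Icc (X i k) (X i (k + 1)) →
      (pos w).2 = g i (pos w).1 → w = p i k ∨ w = p i (k + 1) := by
    intro i k w hk hx hy
    obtain ⟨k', hk', rfl⟩ := hvert i _ w (hIcc i k hk _ hx) (Prod.ext rfl hy)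
    rw [hpos i k' hk'] at hx
    have h1 : k ≤ k' := (hX i).le_iff_le.1 hx.1
    have h2 : k' ≤ k + 1 := (hX i).le_iff_le.1 hx.2
    rcases (by omega : k' = k ∨ k' = k + 1) with rfl | rfl <;> simp
  -- a common point of two curves is a crossing or a vertex
  have hmeet : ∀ i j x, x ∈ Icc (X i 0) (X i (L i)) → x ∈ Icc (X j 0) (X j (L j)) →
      g i x = g j x → C i j x ∨ ∃ w, pos w = (x, g i x) := by
    intro i j x hi hj hx
    rcases hi.1.eq_or_lt with rfl | h1
    · exact .inr ⟨_, hpos i 0 (Nat.zero_le _)⟩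
    rcases hi.2.eq_or_lt with rfl | h2
    · exact .inr ⟨_, hpos i _ le_rfl⟩
    rcases hj.1.eq_or_lt with rfl | h3
    · exact .inr ⟨_, hx ▸ hpos j 0 (Nat.zero_le _)⟩
    rcases hj.2.eq_or_lt with rfl | h4
    · exact .inr ⟨_, hx ▸ hpos j _ le_rfl⟩
    exact .inl ((hC i j x).2 ⟨⟨h1, h2⟩, ⟨h3, h4⟩, hx⟩)
  have himg : ∀ u v i k, s(u, v) = s(p i k, p i (k + 1)) → ∀ w, w = p i k ∨ w = p i (k + 1) →
      pos w ∈ pos '' {u, v} := by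
    intro u v i k he w hw
    refine mem_image_of_mem _ ?_
    have : w ∈ s(u, v) := by rw [he]; simpa using hw
    simpa using this
  refine ⟨⟨hinj, ?_, ?_⟩, ?_⟩
  · intro u v huv w hw
    obtain ⟨i, k, hk, he, hs, -⟩ := hedge u v huv
    obtain ⟨hx, hy⟩ := (hs _).1 hw
    have := himg u v i k he w (hon i k w hk hx hy)
    obtain ⟨w', hw', hww⟩ := this
    simpa [hinj hww] using hw'
  · intro u v x y huv hxy hne
    obtain ⟨i, k, hk, he, hs, ho⟩ := hedge u v huv
    obtain ⟨j, l, hl, he', hs', ho'⟩ := hedge x y hxy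
    have vertex : ∀ w, pos w ∈ segment ℝ (pos u) (pos v) → pos w ∈ segment ℝ (pos x) (pos y) →
        pos w ∈ pos '' {u, v} ∩ pos '' {x, y} := fun w h h' =>
      ⟨himg u v i k he w (hon i k w hk ((hs _).1 h).1 ((hs _).1 h).2),
        himg x y j l he' w (hon j l w hl ((hs' _).1 h').1 ((hs' _).1 h').2)⟩
    by_cases hij : i = j
    · subst hij
      left
      rintro z ⟨hz, hz'⟩
      obtain ⟨hz1, hz2⟩ := (hs z).1 hz
      obtain ⟨hz3, -⟩ := (hs' z).1 hz'
      have hkl : k ≠ l := by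
        rintro rfl
        exact hne (he.trans he'.symm)
      obtain ⟨w, rfl⟩ : ∃ w, pos w = z := by
        rcases hkl.lt_or_gt with h | h
        · have := (hX i).monotone (Nat.succ_le_of_lt h)
          have hzl : z.1 = X i l := le_antisymm (hz1.2.trans this) hz3.1
          exact ⟨p i l, by rw [hpos i l hl.le, ← hzl, ← hz2]⟩
        · have := (hX i).monotone (Nat.succ_le_of_lt h)
          have hzk : z.1 = X i k := le_antisymm (hz3.2.trans this) hz1.1
          exact ⟨p i k, by rw [hpos i k hk.le, ← hzk, ← hz2]⟩
      exact vertex w hz hz'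
    · by_cases hcr : ∃ z, z ∈ segment ℝ (pos u) (pos v) ∧ z ∈ segment ℝ (pos x) (pos y) ∧
          C i j z.1
      · right
        obtain ⟨z, hz, hz', hzC⟩ := hcr
        obtain ⟨hz1, hz2⟩ := (hs z).1 hz
        obtain ⟨hz3, hz4⟩ := (hs' z).1 hz'
        have hzC' : C j i z.1 := by
          rw [hC] at hzC ⊢
          exact ⟨hzC.2.1, hzC.1, hzC.2.2.symm⟩
        refine ⟨z, Set.eq_singleton_iff_unique_mem.2 ⟨⟨hz, hz'⟩, ?_⟩, ?_, ?_⟩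
        · rintro y ⟨hy, hy'⟩
          obtain ⟨hy1, hy2⟩ := (hs y).1 hy
          obtain ⟨hy3, hy4⟩ := (hs' y).1 hy'
          rcases hmeet i j y.1 (hIcc i k hk _ hy1) (hIcc j l hl _ hy3) (hy2.symm.trans hy4) with
            h | ⟨w, hw⟩
          · have := huniq i j _ _ hij hzC h
            exact Prod.ext this.symm (by rw [hy2, hz2, this])
          · obtain ⟨k', hk', hwk⟩ := hvert i _ w (hIcc i k hk _ hy1) hw
            obtain ⟨l', hl', hwl⟩ := hvert j _ w (hIcc j l hl _ hy3) (by rw [hw, ← hy2, hy4])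
            exact absurd (hwk.symm.trans hwl) (hdisj i j _ hij hzC k' hk' l' hl')
        · exact (ho z).2 ⟨⟨lt_of_le_of_ne hz1.1 (hbreak i j _ hij hzC k hk.le).symm,
            lt_of_le_of_ne hz1.2 (hbreak i j _ hij hzC (k + 1) hk)⟩, hz2⟩
        · exact (ho' z).2 ⟨⟨lt_of_le_of_ne hz3.1 (hbreak j i _ (Ne.symm hij) hzC' l hl.le).symm,
            lt_of_le_of_ne hz3.2 (hbreak j i _ (Ne.symm hij) hzC' (l + 1) hl)⟩, hz4⟩
      · left
        rintro z ⟨hz, hz'⟩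
        obtain ⟨hz1, hz2⟩ := (hs z).1 hz
        obtain ⟨hz3, hz4⟩ := (hs' z).1 hz'
        rcases hmeet i j z.1 (hIcc i k hk _ hz1) (hIcc j l hl _ hz3) (hz2.symm.trans hz4) with
          h | ⟨w, hw⟩
        · exact absurd ⟨z, hz, hz', h⟩ hcr
        · obtain rfl : pos w = z := by rw [hw, ← hz2]
          exact vertex w hz hz'
  · intro u v huv
    obtain ⟨i, k, hk, he, hs, ho⟩ := hedge u v huv
    have hcr : ∀ q ∈ crossingEdges G pos u v, ∃ j l x, i ≠ j ∧ l < L j ∧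
        q = s(p j l, p j (l + 1)) ∧ C i j x ∧ x ∈ Ioo (X i k) (X i (k + 1)) ∧
        x ∈ Ioo (X j l) (X j (l + 1)) := by
      rintro q ⟨hq, x, y, rfl, z, hz, hzo, hzo'⟩
      obtain ⟨j, l, hl, he', hs', ho'⟩ := hedge x y hq
      obtain ⟨hz1, hz2⟩ := (ho z).1 hzo
      obtain ⟨hz3, hz4⟩ := (ho' z).1 hzo'
      refine ⟨j, l, z.1, ?_, hl, he', ?_, hz1, hz3⟩
      · rintro rfl
        have h1 : k < l + 1 := (hX i).lt_iff_lt.1 (hz1.1.trans hz3.2)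
        have h2 : l < k + 1 := (hX i).lt_iff_lt.1 (hz3.1.trans hz1.2)
        obtain rfl : k = l := by omega
        have hmem : ∀ t ∈ Icc (X i k) (X i (k + 1)), t = z.1 := by
          intro t ht
          have : ((t, g i t) : ℝ × ℝ) ∈ ({z} : Set (ℝ × ℝ)) := by
            rw [← hz]
            exact ⟨(hs _).2 ⟨ht, rfl⟩, (hs' _).2 ⟨ht, rfl⟩⟩
          exact congrArg Prod.fst this
        have := hmem _ (left_mem_Icc.2 (hX i k.lt_succ_self).le)
        exact hz1.1.ne this
      · exact (hC _ _ _).2 ⟨hIoo i k hk _ hz1, hIoo j l hl _ hz3, hz2.symm.trans hz4⟩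
    intro q hq q' hq'
    obtain ⟨j, l, x, hij, hl, rfl, hx, hxi, hxj⟩ := hcr q hq
    obtain ⟨j', l', x', hij', hl', rfl, hx', hxi', hxj'⟩ := hcr q' hq'
    obtain rfl := hsub i k hk x hxi x' hxi' j j' hij hij' hx hx'
    by_cases hjj : j = j'
    · subst hjj
      have h1 : l < l' + 1 := (hX j).lt_iff_lt.1 (hxj.1.trans hxj'.2)
      have h2 : l' < l + 1 := (hX j).lt_iff_lt.1 (hxj'.1.trans hxj.2)
      obtain rfl : l = l' := by omega
      rfl
    · exact absurd hx' (htriple i j j' x hij hij' hjj hx)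

theorem AffineOnIcc.mono {g : ℝ → ℝ} {p q p' q' : ℝ} (h : AffineOnIcc g p q) (hp : p ≤ p')
    (hq : q' ≤ q) : AffineOnIcc g p' q' := by
  obtain ⟨m, d, h⟩ := h
  exact ⟨m, d, fun x hx => h x ⟨hp.trans hx.1, hx.2.trans hq⟩⟩

theorem geomOnePlanar_of_paths {V : Type*} (G : SimpleGraph V) {f : ℕ} (t : V → ℝ)
    [Finite V] (ht : Function.Injective t)
    (htd : ∀ σ : Fin 6 ↪ V,
      chordDet (t (σ 0)) (t (σ 1)) (t (σ 2)) (t (σ 3)) (t (σ 4)) (t (σ 5)) ≠ 0)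
    (p : Fin f → ℕ → V) (L : Fin f → ℕ) (hL : ∀ i, 1 ≤ L i) (hfL : ∀ i, f ≤ L i + 1)
    (hp : ∀ i, ∀ k ≤ L i, ∀ l ≤ L i, p i k = p i l → k = l)
    (hinterior : ∀ i j k l, 0 < k → k < L i → l ≤ L j → p i k = p j l → i = j)
    (hsimple : ∀ i j, i ≠ j → p i 0 = p j 0 → p i (L i) = p j (L j) → L i = 1 → L j ≠ 1)
    (hori : ∀ i, t (p i 0) < t (p i (L i)))
    (hadj : ∀ u v, G.Adj u v → ∃ i k, k < L i ∧ s(u, v) = s(p i k, p i (k + 1))) :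
    GeomOnePlanar G := by
  classical
  let bent : Fin f → Prop := fun i =>
    (∃ j, i ≠ j ∧ p i 0 = p j 0 ∧ p i (L i) = p j (L j)) ∧ 2 ≤ L i
  let c : Fin f → ℝ := fun i => if bent i then (i : ℕ) + 1 else 0
  obtain ⟨η, hη, g, hηb, hga, hgb, hleft, hright, hstraight, hterm, hcross, huniq, htriple⟩ :=
    exists_bent_chords (range t) (finite_range t) (fun i => t (p i 0)) (fun i => t (p i (L i))) c
      (fun i => mem_range_self _) (fun i => mem_range_self _) hori
      (by
        intro i j hij ha hb hcc
        have ha' := ht ha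
        have hb' := ht hb
        have hi : (∃ j, i ≠ j ∧ p i 0 = p j 0 ∧ p i (L i) = p j (L j)) := ⟨j, hij, ha', hb'⟩
        have hj : (∃ i, j ≠ i ∧ p j 0 = p i 0 ∧ p j (L j) = p i (L i)) :=
          ⟨i, hij.symm, ha'.symm, hb'.symm⟩
        have hLL := hsimple i j hij ha' hb'
        have hLi := hL i
        have hLj := hL j
        simp only [c, bent, hi, hj, true_and] at hcc
        split_ifs at hcc with h1 h2 h2
        · exact hij (Fin.ext (by exact_mod_cast add_right_cancel hcc))
        · have : (0 : ℝ) ≤ (i : ℕ) := Nat.cast_nonneg _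
          linarith
        · have : (0 : ℝ) ≤ (j : ℕ) := Nat.cast_nonneg _
          linarith
        · omega)
      (by
        intro i j k h1 h2 h3 h4 h5 h6 h7 h8 h9 h10 h11 h12
        have hnd : [p i 0, p i (L i), p j 0, p j (L j), p k 0, p k (L k)].Nodup := by
          have e : ∀ {x y}, t x ≠ t y → x ≠ y := fun h h' => h (congrArg t h')
          simp [e h1, e h2, e h3, e h4, e h5, e h6, e h7, e h8, e h9, e h10, e h11, e h12,
            e (hori i).ne, e (hori j).ne, e (hori k).ne]
        exact htd ⟨fun m => [p i 0, p i (L i), p j 0, p j (L j), p k 0, p k (L k)].get m,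
          List.nodup_iff_injective_get.1 hnd⟩)
  let C : Fin f → Fin f → ℝ → Prop := fun i j x =>
    x ∈ Ioo (t (p i 0)) (t (p i (L i))) ∧ x ∈ Ioo (t (p j 0)) (t (p j (L j))) ∧ g i x = g j x
  -- the crossings on a curve are at most as many as the curves that may cross it
  have hcard : ∀ i, ∀ S : Finset (Fin f), (∀ j x, i ≠ j → C i j x → j ∈ S) →
      ∃ D : Finset ℝ, (∀ x, x ∈ D ↔ ∃ j, i ≠ j ∧ C i j x) ∧ D.card ≤ S.card := by
    intro i S hS
    have : Nonempty (Fin f) := ⟨i⟩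
    let A : Set ℝ := {x | ∃ j, i ≠ j ∧ C i j x}
    choose! J hJ using fun x (hx : x ∈ A) => hx
    have hmaps : MapsTo J A S := fun x hx => hS _ x (hJ x hx).1 (hJ x hx).2
    have hJinj : InjOn J A := by
      intro x hx y hy hxy
      obtain ⟨h1, h2, h3, h4⟩ := hJ x hx
      obtain ⟨-, h5, h6, h7⟩ := hJ y hy
      rw [← hxy] at h6 h7
      exact huniq i (J x) h1 x h2 h3 h4 y h5 h6 h7
    have hfin : A.Finite := Set.Finite.of_injOn hmaps hJinj S.finite_toSet
    refine ⟨hfin.toFinset, fun x => hfin.mem_toFinset,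
      Finset.card_le_card_of_injOn J (fun x hx => hmaps (hfin.mem_toFinset.1 hx)) ?_⟩
    intro x hx y hy hxy
    exact hJinj (hfin.mem_toFinset.1 hx) (hfin.mem_toFinset.1 hy) hxy
  have hbreaks : ∀ i, ∃ X : ℕ → ℝ, StrictMono X ∧ X 0 = t (p i 0) ∧ X (L i) = t (p i (L i)) ∧
      (∀ k ≤ L i, ∀ j, i ≠ j → ¬ C i j (X k)) ∧
      (∀ k < L i, AffineOnIcc (g i) (X k) (X (k + 1))) ∧
      ∀ k < L i, ∀ x ∈ Ioo (X k) (X (k + 1)), ∀ y ∈ Ioo (X k) (X (k + 1)),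
        ∀ j j', i ≠ j → i ≠ j' → C i j x → C i j' y → x = y := by
    intro i
    have hfi := hfL i
    by_cases hb : bent i
    · obtain ⟨⟨j₀, hj₀, hpa, hpb⟩, hL2⟩ := hb
      obtain ⟨n, hn⟩ : ∃ n, L i = n + 2 := ⟨L i - 2, by omega⟩
      obtain ⟨D, hD, hDS⟩ := hcard i ((Finset.univ.erase i).erase j₀) fun j x hij hx => by
        have hne := hcross i j hij x hx.1 hx.2.1 hx.2.2
        refine Finset.mem_erase.2 ⟨?_, Finset.mem_erase.2 ⟨hij.symm, Finset.mem_univ _⟩⟩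
        rintro rfl
        exact hne.1 (congrArg t hpa)
      rw [Finset.card_erase_of_mem (Finset.mem_erase.2 ⟨hj₀.symm, Finset.mem_univ _⟩),
        Finset.card_erase_of_mem (Finset.mem_univ _), Finset.card_univ, Fintype.card_fin] at hDS
      have hDlt : ∀ x ∈ D, t (p i 0) + η < x ∧ x < t (p i (L i)) := fun x hx => by
        obtain ⟨j, hij, h1, h2, h3⟩ := (hD x).1 hx
        exact ⟨(hcross i j hij x h1 h2 h3).2.2, h1.2⟩
      obtain ⟨X, hX, hX0, hXn, hXC, hXs⟩ := exists_breakpoints n D _ _ (hηb i) hDlt (by omega)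
      have hle : ∀ k, t (p i 0) + η ≤ X k := fun k => hX0 ▸ hX.monotone (Nat.zero_le k)
      refine ⟨fun k => Nat.casesOn k (t (p i 0)) X, ?_, rfl, by rw [hn] at hXn ⊢; exact hXn,
        ?_, ?_, ?_⟩
      · refine strictMono_nat_of_lt_succ fun k => ?_
        cases k with
        | zero => exact (lt_add_of_pos_right _ hη).trans_le (hle 0)
        | succ k => exact hX k.lt_succ_self
      · intro k hk j hij h
        cases k with
        | zero => exact h.1.1.false
        | succ k => exact hXC k (by omega) ((hD _).2 ⟨j, hij, h⟩)
      · intro k hk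
        cases k with
        | zero => exact (hleft i).mono le_rfl hX0.le
        | succ k => exact (hright i).mono (hle k) (hXn ▸ hX.monotone (by omega))
      · intro k hk x hx y hy j j' hij hij' hCx hCy
        have hxD := (hD x).2 ⟨j, hij, hCx⟩
        cases k with
        | zero => exact absurd (hx.2.trans_eq hX0) (hDlt x hxD).1.not_gt
        | succ k => exact hXs k (by omega) ⟨hx, hxD⟩ ⟨hy, (hD y).2 ⟨j', hij', hCy⟩⟩
    · obtain ⟨n, hn⟩ : ∃ n, L i = n + 1 := ⟨L i - 1, by have := hL i; omega⟩
      obtain ⟨D, hD, hDS⟩ := hcard i (Finset.univ.erase i) fun j x hij _ =>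
        Finset.mem_erase.2 ⟨hij.symm, Finset.mem_univ _⟩
      rw [Finset.card_erase_of_mem (Finset.mem_univ _), Finset.card_univ,
        Fintype.card_fin] at hDS
      obtain ⟨X, hX, hX0, hXn, hXC, hXs⟩ := exists_breakpoints n D _ _ (hori i)
        (fun x hx => by obtain ⟨j, hij, h1, -⟩ := (hD x).1 hx; exact h1) (by omega)
      refine ⟨X, hX, hX0, by rw [hn] at hXn ⊢; exact hXn, ?_, ?_, ?_⟩
      · intro k hk j hij h
        exact hXC k (by omega) ((hD _).2 ⟨j, hij, h⟩)
      · intro k hk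
        exact (hstraight i (if_neg hb)).mono (hX0 ▸ hX.monotone (Nat.zero_le k))
          (hXn ▸ hX.monotone (by omega))
      · intro k hk x hx y hy j j' hij hij' hCx hCy
        exact hXs k (by omega) ⟨hx, (hD x).2 ⟨j, hij, hCx⟩⟩ ⟨hy, (hD y).2 ⟨j', hij', hCy⟩⟩
  choose X hX hX0 hXL hXC hXaff hXsub using hbreaks
  let inner : V → Prop := fun w => ∃ i k, 0 < k ∧ k < L i ∧ w = p i k
  obtain ⟨pos, hposi, hpost⟩ : ∃ pos : V → ℝ × ℝ,
      (∀ i k, 0 < k → k < L i → pos (p i k) = (X i k, g i (X i k))) ∧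
      ∀ w, ¬ inner w → pos w = (t w, t w ^ 2) := by
    have hz : ∀ w, ∃ z : ℝ × ℝ,
        (∀ i k, 0 < k → k < L i → w = p i k → z = (X i k, g i (X i k))) ∧
        (¬ inner w → z = (t w, t w ^ 2)) := by
      intro w
      by_cases hw : inner w
      · obtain ⟨i, k, hk0, hkL, rfl⟩ := hw
        refine ⟨(X i k, g i (X i k)), fun j l hl0 hlL h => ?_,
          fun h => absurd ⟨i, k, hk0, hkL, rfl⟩ h⟩
        obtain rfl := hinterior i j k l hk0 hkL hlL.le h
        rw [hp i k hkL.le l hlL.le h]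
      · exact ⟨_, fun i k hk0 hkL h => absurd ⟨i, k, hk0, hkL, h⟩ hw, fun _ => rfl⟩
    choose pos h1 h2 using hz
    exact ⟨pos, fun i k hk0 hkL => h1 _ i k hk0 hkL rfl, h2⟩
  have hend : ∀ i k, k ≤ L i → (k = 0 ∨ k = L i) → ¬ inner (p i k) := by
    rintro i k hk hk' ⟨j, l, hl0, hlL, h⟩
    obtain rfl := hinterior j i l k hl0 hlL hk h.symm
    have := hp j k hk l hlL.le h
    omega
  have hpos : ∀ i k, k ≤ L i → pos (p i k) = (X i k, g i (X i k)) := by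
    intro i k hk
    rcases Nat.eq_zero_or_pos k with rfl | hk0
    · rw [hpost _ (hend i 0 hk (.inl rfl)), hX0, hga]
    · rcases hk.eq_or_lt with rfl | hkL
      · rw [hpost _ (hend i _ hk (.inr rfl)), hXL, hgb]
      · exact hposi i k hk0 hkL
  have hterm' : ∀ i w, t w ∈ Icc (X i 0) (X i (L i)) → g i (t w) = t w ^ 2 →
      w = p i 0 ∨ w = p i (L i) := by
    intro i w hw h
    rw [hX0, hXL] at hw
    exact (hterm i _ (mem_range_self w) hw h).imp (fun h => ht h) (fun h => ht h)
  have hvert : ∀ i x w, x ∈ Icc (X i 0) (X i (L i)) → pos w = (x, g i x) →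
      ∃ k ≤ L i, w = p i k := by
    intro i x w hx hw
    by_cases hin : inner w
    · obtain ⟨j, l, hl0, hlL, rfl⟩ := hin
      rw [hposi j l hl0 hlL, Prod.mk.injEq] at hw
      obtain ⟨rfl, hw⟩ := hw
      by_cases hij : i = j
      · subst hij
        exact ⟨l, hlL.le, rfl⟩
      have hj : X j l ∈ Ioo (X j 0) (X j (L j)) := ⟨hX j hl0, hX j hlL⟩
      have hend' : ∀ v, X j l = t v → g i (t v) = t v ^ 2 → False := fun v hv hgv => by
        have hjv : g j (t v) = t v ^ 2 := by rw [← hgv, ← hv, hw]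
        rcases hterm' j v (hv ▸ ⟨hj.1.le, hj.2.le⟩) hjv with rfl | rfl
        · rw [hv, hX0] at hj
          exact hj.1.false
        · rw [hv, hXL] at hj
          exact hj.2.false
      rcases hx.1.eq_or_lt with h1 | h1
      · exact (hend' _ (h1.symm.trans (hX0 i)) (hga i)).elim
      rcases hx.2.eq_or_lt with h2 | h2
      · exact (hend' _ (h2.trans (hXL i)) (hgb i)).elim
      refine (hXC j l hlL.le i (Ne.symm hij) ⟨?_, ?_, hw⟩).elim
      · rwa [← hX0, ← hXL]
      · rw [← hX0, ← hXL]; exact ⟨h1, h2⟩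
    · rw [hpost w hin, Prod.mk.injEq] at hw
      obtain ⟨rfl, hw⟩ := hw
      rcases hterm' i w hx hw.symm with h | h
      · exact ⟨0, Nat.zero_le _, h⟩
      · exact ⟨L i, le_rfl, h⟩
  have hinj_of_inner : ∀ w w', inner w → pos w = pos w' → w = w' := by
    rintro w w' ⟨i, k, hk0, hkL, rfl⟩ h
    have hk := hpos i k hkL.le
    obtain ⟨l, hl, rfl⟩ := hvert i (X i k) w' ⟨(hX i hk0).le, (hX i hkL).le⟩ (h ▸ hk)
    rw [hk, hpos i l hl, Prod.mk.injEq] at h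
    rw [(hX i).injective h.1]
  have hinj : Function.Injective pos := by
    intro w w' h
    by_cases hw : inner w
    · exact hinj_of_inner w w' hw h
    by_cases hw' : inner w'
    · exact (hinj_of_inner w' w hw' h.symm).symm
    rw [hpost w hw, hpost w' hw', Prod.mk.injEq] at h
    exact ht h.1
  refine ⟨pos, isGeom1Planar_of_monotone_curves G pos p L X g C ?_ hX hpos hXaff hadj hinj hvert
    ?_ ?_ ?_ ?_ hXsub⟩
  · intro i j x
    simp only [C, hX0, hXL]
  · rintro i j x hij hx k hk rfl
    exact hXC i k hk j hij hx
  · intro i j x y hij hx hy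
    exact huniq i j hij x hx.1 hx.2.1 hx.2.2 y hy.1 hy.2.1 hy.2.2
  · intro i j x hij hx k hk l hl h
    obtain ⟨h1, h2, -⟩ := hcross i j hij x hx.1 hx.2.1 hx.2.2
    have hk' : k = 0 ∨ k = L i := by
      by_contra! hne
      exact hij (hinterior i j k l (by omega) (by omega) hl h)
    have hl' : l = 0 ∨ l = L j := by
      by_contra! hne
      exact hij (hinterior j i l k (by omega) (by omega) hk h.symm).symm
    rcases hk' with rfl | rfl <;> rcases hl' with rfl | rfl
    · exact h1 (congrArg t h)
    · exact (hx.1.1.trans hx.2.1.2).ne (congrArg t h)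
    · exact (hx.2.1.1.trans hx.1.2).ne' (congrArg t h)
    · exact h2 (congrArg t h)
  · intro i j k x hij hik hjk hx hx'
    exact htriple i j k hij hik hjk x hx.1 hx.2.1 hx'.2.1 hx.2.2 hx'.2.2

/-- Let `G` be a finite simple graph whose edge set is partitioned into `f` degree-2 paths
(`P i` is a simple path from `u i` to `v i` whose internal vertices have degree two in
`G`), each of length at least `f − 1`.  Then `G` is geometric 1-planar. -/
theorem stmt10 {V : Type*} [Fintype V] (G : SimpleGraph V) [DecidableRel G.Adj]
    (f : ℕ) (u v : Fin f → V) (P : ∀ i, G.Walk (u i) (v i))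
    (hpath : ∀ i, (P i).IsPath)
    (hdeg2 : ∀ i, ∀ w ∈ (P i).support, w ≠ u i → w ≠ v i → G.degree w = 2)
    (hlen : ∀ i, f - 1 ≤ (P i).length)
    (hcover : ∀ e : Sym2 V, e ∈ G.edgeSet ↔ ∃ i, e ∈ (P i).edges)
    (hdisj : ∀ i j, i ≠ j → ∀ e ∈ (P i).edges, e ∉ (P j).edges) :
    GeomOnePlanar G := by
  classical
  obtain ⟨t, ht, htd⟩ := exists_generic_abscissae V
  by_cases hL : ∀ i, 1 ≤ (P i).length
  · have hor : ∀ i, ∃ p : ℕ → V,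
        (∀ k ≤ (P i).length, ∀ l ≤ (P i).length, p k = p l → k = l) ∧
        t (p 0) < t (p (P i).length) ∧
        (∀ k, 0 < k → k < (P i).length → G.degree (p k) = 2) ∧
        ∀ e, e ∈ (P i).edges ↔ ∃ k < (P i).length, e = s(p k, p (k + 1)) := by
      intro i
      have hinj : ∀ k ≤ (P i).length, ∀ l ≤ (P i).length,
          (P i).getVert k = (P i).getVert l → k = l := fun k hk l hl h =>
        (hpath i).getVert_injOn hk hl h
      have hdeg : ∀ k, 0 < k → k < (P i).length → G.degree ((P i).getVert k) = 2 := by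
        intro k hk0 hkL
        refine hdeg2 i _ ((P i).getVert_mem_support k) (fun h => ?_) (fun h => ?_)
        · have := hinj k hkL.le 0 (Nat.zero_le _) (by simpa using h)
          omega
        · have := hinj k hkL.le _ le_rfl (by simpa using h)
          omega
      have hedges : ∀ e, e ∈ (P i).edges ↔
          ∃ k < (P i).length, e = s((P i).getVert k, (P i).getVert (k + 1)) := by
        rintro ⟨x, y⟩
        exact (P i).mk_mem_edges_iff_exists.trans
          (exists_congr fun k => and_congr_right fun _ => eq_comm)
      have hne : t ((P i).getVert 0) ≠ t ((P i).getVert (P i).length) := fun h => by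
        have := hinj _ (Nat.zero_le _) _ le_rfl (ht h)
        have := hL i
        omega
      rcases hne.lt_or_gt with h | h
      · exact ⟨(P i).getVert, hinj, h, hdeg, hedges⟩
      · refine ⟨fun k => (P i).getVert ((P i).length - k), ?_, by simpa using h, ?_, ?_⟩
        · intro k hk l hl hkl
          have := hinj _ (Nat.sub_le _ _) _ (Nat.sub_le _ _) hkl
          omega
        · intro k hk0 hkL
          exact hdeg _ (by omega) (by omega)
        · intro e
          rw [hedges]
          constructor
          · rintro ⟨k, hk, rfl⟩
            refine ⟨(P i).length - k - 1, by omega, ?_⟩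
            beta_reduce
            rw [Sym2.eq_swap, show (P i).length - ((P i).length - k - 1) = k + 1 by omega,
              show (P i).length - ((P i).length - k - 1 + 1) = k by omega]
          · rintro ⟨k, hk, rfl⟩
            refine ⟨(P i).length - k - 1, by omega, ?_⟩
            rw [Sym2.eq_swap, show (P i).length - k - 1 + 1 = (P i).length - k by omega,
              Nat.sub_sub]
    choose p hinj hori hdeg hedges using hor
    have hmem : ∀ i k, k < (P i).length → s(p i k, p i (k + 1)) ∈ (P i).edges :=
      fun i k hk => (hedges i _).2 ⟨k, hk, rfl⟩
    have hG : ∀ i e, e ∈ (P i).edges → e ∈ G.edgeSet := fun i e he => (hcover e).2 ⟨i, he⟩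
    refine geomOnePlanar_of_paths G t ht htd p (fun i => (P i).length) hL
      (fun i => by have := hlen i; omega) hinj ?_ ?_ hori ?_
    · intro i j k l hk0 hkL hl h
      by_contra hij
      obtain ⟨k, rfl⟩ : ∃ k', k = k' + 1 := ⟨k - 1, by omega⟩
      have e1 : s(p i (k + 1), p i k) ∈ (P i).edges := by
        rw [Sym2.eq_swap]; exact hmem i k (by omega)
      have e2 : s(p i (k + 1), p i (k + 1 + 1)) ∈ (P i).edges := hmem i (k + 1) hkL
      obtain ⟨z, e3⟩ : ∃ z, s(p i (k + 1), z) ∈ (P j).edges := by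
        rw [h]
        rcases hl.eq_or_lt with rfl | hlt
        · obtain ⟨m, hm⟩ : ∃ m, (P j).length = m + 1 := ⟨_, (Nat.sub_add_cancel (hL j)).symm⟩
          refine ⟨p j m, ?_⟩
          rw [Sym2.eq_swap]
          have := hmem j m (by omega)
          rwa [← hm] at this
        · exact ⟨_, hmem j l hlt⟩
      have h1 : p i k ≠ p i (k + 1 + 1) := fun h => by
        have := hinj i _ (by omega) _ (by omega) h
        omega
      have h2 : p i k ≠ z := by
        rintro rfl; exact hdisj i j hij _ e1 e3
      have h3 : p i (k + 1 + 1) ≠ z := by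
        rintro rfl; exact hdisj i j hij _ e2 e3
      have hsub : ({p i k, p i (k + 1 + 1), z} : Finset V) ⊆ G.neighborFinset (p i (k + 1)) := by
        intro w hw
        rw [SimpleGraph.mem_neighborFinset, ← SimpleGraph.mem_edgeSet]
        simp only [Finset.mem_insert, Finset.mem_singleton] at hw
        rcases hw with rfl | rfl | rfl
        · exact hG i _ e1
        · exact hG i _ e2
        · exact hG j _ e3
      have := Finset.card_le_card hsub
      rw [SimpleGraph.card_neighborFinset_eq_degree, hdeg i _ hk0 hkL,
        Finset.card_eq_three.2 ⟨_, _, _, h1, h2, h3, rfl⟩] at this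
      omega
    · intro i j hij h0 h1 hi hj
      refine hdisj i j hij _ (hmem i 0 (hL i)) ?_
      have := hmem j 0 (hL j)
      rw [hi, hj] at h1
      rwa [zero_add, h0, h1]
    · intro x y hxy
      obtain ⟨i, hi⟩ := (hcover s(x, y)).1 hxy
      obtain ⟨k, hk, he⟩ := (hedges i _).1 hi
      exact ⟨i, k, hk, he⟩
  · push Not at hL
    obtain ⟨i, hi⟩ := hL
    have hf : f ≤ 1 := by have := hlen i; omega
    have hno : ∀ x y, ¬ G.Adj x y := fun x y hxy => by
      obtain ⟨j, hj⟩ := (hcover s(x, y)).1 hxy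
      obtain rfl : i = j := Fin.ext (by omega)
      have : (P i).edges.length = 0 := by rw [SimpleGraph.Walk.length_edges]; omega
      rw [List.length_eq_zero_iff.1 this] at hj
      exact List.not_mem_nil hj
    exact ⟨fun w => (t w, 0), ⟨fun x y h => ht (congrArg Prod.fst h),
      fun x y h => absurd h (hno x y), fun x y _ _ h => absurd h (hno x y)⟩,
      fun x y h => absurd h (hno x y)⟩
end
end
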